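/- arXiv:1712.09172 — 2 statements merged into one kernel-verified Lean document; each statement's English description precedes it below -/
import Mathlib

section
/- Let p₁, p̄₁, θ₁, θ̄₁ be real numbers with p₁ + p̄₁ ≠ 0, and suppose the denominator D(x,t) := 1 + exp((p₁+p̄₁)x − i(p₁² − p̄₁²)t − i(θ₁ + θ̄₁)) is nonzero for all (x,t) ∈ ℝ². Then the function q(x,t) := (p₁+p̄₁)·exp(p₁x − i p₁² t − i θ₁) / D(x,t) satisfies the focusing nonlocal NLS equation i·∂ₜq(x,t) = ∂ₓ²q(x,t) + 2·conj(q(−x,t))·q(x,t)² for all (x,t). -/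
open Complex ComplexConjugate

/-!
Write `q = g / f` and `conj q(-x,t) = h / f`. In terms of Hirota's bilinear operators `Dⁿ`, the
quotient rules read `∂ₜ(g/f) = Dₜ g·f / f²` and `∂ₓ²(g/f) = Dₓ² g·f / f² - (g/f) (Dₓ² f·f / f²)`, so
the nonlocal NLS equation follows from the bilinear equations `i Dₜ g·f = Dₓ² g·f` and
`Dₓ² f·f = 2 g h`. For the soliton, `g = (p₁+p̄₁) E`, `h = (p₁+p̄₁) Ē` and `f = 1 + E Ē` with
exponentials `E = exp(p₁x - i p₁²t - iθ₁)`, `Ē = exp(p̄₁x + i p̄₁²t - iθ̄₁)`, and the bilinear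
equations hold for arbitrary complex parameters. Real parameters are what makes
`conj E(-x,t) = 1 / E(x,t)`, and this identifies `h / f` with `conj q(-x,t)`.
-/

section HirotaDeriv

variable {𝕜 𝕂 : Type*} [NontriviallyNormedField 𝕜] [NontriviallyNormedField 𝕂] [NormedAlgebra 𝕜 𝕂]
  {f g u v : 𝕜 → 𝕂} {x : 𝕜} {k l : 𝕂}

/-- Hirota's bilinear derivative `Dⁿ g·f = (∂_y - ∂_z)ⁿ g(y) f(z)`, evaluated at `y = z = x` and
expanded by the binomial theorem. -/
noncomputable def hirotaDeriv (n : ℕ) (g f : 𝕜 → 𝕂) (x : 𝕜) : 𝕂 :=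
  ∑ j ∈ Finset.range (n + 1),
    (-1) ^ j * n.choose j * iteratedDeriv (n - j) g x * iteratedDeriv j f x

theorem hirotaDeriv_one : hirotaDeriv 1 g f x = deriv g x * f x - g x * deriv f x := by
  simp only [hirotaDeriv, Finset.sum_range_succ, Finset.sum_range_zero, Nat.choose_zero_right,
    Nat.choose_self, Nat.cast_one, tsub_zero, tsub_self, iteratedDeriv_zero, iteratedDeriv_one]
  ring

theorem hirotaDeriv_two :
    hirotaDeriv 2 g f x =
      deriv (deriv g) x * f x - 2 * deriv g x * deriv f x + g x * deriv (deriv f) x := by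
  simp only [hirotaDeriv, Finset.sum_range_succ, Finset.sum_range_zero, Nat.choose_zero_right,
    Nat.choose_one_right, Nat.choose_self, Nat.cast_one, Nat.cast_ofNat, tsub_zero, tsub_self,
    Nat.add_one_sub_one, iteratedDeriv_zero, iteratedDeriv_succ]
  ring

theorem deriv_fun_div_eq_hirotaDeriv (hg : DifferentiableAt 𝕜 g x) (hf : DifferentiableAt 𝕜 f x)
    (hf₀ : f x ≠ 0) : deriv (fun y => g y / f y) x = hirotaDeriv 1 g f x / f x ^ 2 := by
  rw [deriv_fun_div hg hf hf₀, hirotaDeriv_one]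

theorem deriv_deriv_fun_div_eq_hirotaDeriv (hg : ContDiffAt 𝕜 2 g x) (hf : ContDiffAt 𝕜 2 f x)
    (hf₀ : f x ≠ 0) :
    deriv (deriv fun y => g y / f y) x =
      hirotaDeriv 2 g f x / f x ^ 2 - g x / f x * (hirotaDeriv 2 f f x / f x ^ 2) := by
  have first_deriv : deriv (fun y => g y / f y) =ᶠ[nhds x]
      fun y => (deriv g y * f y - g y * deriv f y) / f y ^ 2 := by
    filter_upwards [hg.eventually (by simp), hf.eventually (by simp),
      hf.continuousAt.eventually_ne hf₀] with y hgy hfy hfy₀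
    exact deriv_fun_div (hgy.differentiableAt two_ne_zero) (hfy.differentiableAt two_ne_zero) hfy₀
  have hg₁ := (hg.differentiableAt two_ne_zero).hasDerivAt
  have hf₁ := (hf.differentiableAt two_ne_zero).hasDerivAt
  have hg₂ := ((hg.derivWithin (m := 1) (by norm_num)).differentiableAt one_ne_zero).hasDerivAt
  have hf₂ := ((hf.derivWithin (m := 1) (by norm_num)).differentiableAt one_ne_zero).hasDerivAt
  have second_deriv := (((hg₂.fun_mul hf₁).fun_sub (hg₁.fun_mul hf₂)).fun_div
    (hf₁.fun_pow 2) (pow_ne_zero 2 hf₀)).deriv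
  rw [first_deriv.deriv_eq, second_deriv, hirotaDeriv_two, hirotaDeriv_two]
  field_simp
  ring

theorem deriv_deriv_of_deriv_eq_mul (hu : ∀ y, deriv u y = k * u y) :
    deriv (deriv u) x = k ^ 2 * u x := by
  rw [funext hu, deriv_const_mul_field, hu]
  ring

theorem hirotaDeriv_one_one_add (hu : ∀ y, deriv u y = k * u y) (hv : ∀ y, deriv v y = l * v y) :
    hirotaDeriv 1 u (fun y => 1 + v y) x = u x * (k + (k - l) * v x) := by
  rw [hirotaDeriv_one, deriv_const_add, hu, hv]
  ring

theorem hirotaDeriv_two_one_add (hu : ∀ y, deriv u y = k * u y) (hv : ∀ y, deriv v y = l * v y) :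
    hirotaDeriv 2 u (fun y => 1 + v y) x = u x * (k ^ 2 + (k - l) ^ 2 * v x) := by
  rw [hirotaDeriv_two, deriv_const_add', deriv_deriv_of_deriv_eq_mul hu,
    deriv_deriv_of_deriv_eq_mul hv, hu, hv]
  ring

theorem hirotaDeriv_two_one_add_self (hv : ∀ y, deriv v y = l * v y) :
    hirotaDeriv 2 (fun y => 1 + v y) (fun y => 1 + v y) x = 2 * l ^ 2 * v x := by
  rw [hirotaDeriv_two, deriv_const_add', deriv_deriv_of_deriv_eq_mul hv, hv]
  ring

theorem nls_of_hirotaDeriv {f g : 𝕜 → 𝕜 → 𝕂} {x t : 𝕜} {a c h : 𝕂}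
    (hgt : DifferentiableAt 𝕜 (fun t' => g x t') t) (hft : DifferentiableAt 𝕜 (fun t' => f x t') t)
    (hgx : ContDiffAt 𝕜 2 (fun x' => g x' t) x) (hfx : ContDiffAt 𝕜 2 (fun x' => f x' t) x)
    (hf₀ : f x t ≠ 0)
    (bilinear_gf : a * hirotaDeriv 1 (fun t' => g x t') (fun t' => f x t') t =
      hirotaDeriv 2 (fun x' => g x' t) (fun x' => f x' t) x)
    (bilinear_ff : hirotaDeriv 2 (fun x' => f x' t) (fun x' => f x' t) x = c * (g x t * h)) :
    a * deriv (fun t' => g x t' / f x t') t =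
      deriv (deriv fun x' => g x' t / f x' t) x + c * (h / f x t) * (g x t / f x t) ^ 2 := by
  rw [deriv_fun_div_eq_hirotaDeriv hgt hft hf₀, deriv_deriv_fun_div_eq_hirotaDeriv hgx hfx hf₀,
    ← mul_div_assoc, bilinear_gf, bilinear_ff]
  ring

end HirotaDeriv

section PlaneWave

/-- The exponential `exp(kx - iωt - iθ)` of which the soliton is built. The phase `θ` carries the
factor `-i`, as in the paper. -/
noncomputable def planeWave (k ω θ : ℂ) (x t : ℝ) : ℂ :=
  exp (k * x - I * ω * t - I * θ)

variable (k k' ω ω' θ θ' : ℂ) (x t : ℝ)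

theorem planeWave_ne_zero : planeWave k ω θ x t ≠ 0 :=
  exp_ne_zero _

theorem planeWave_mul_planeWave :
    planeWave k ω θ x t * planeWave k' ω' θ' x t = planeWave (k + k') (ω + ω') (θ + θ') x t := by
  simp only [planeWave, ← exp_add]
  ring_nf

theorem contDiff_planeWave_left {n : WithTop ℕ∞} : ContDiff ℝ n fun x' => planeWave k ω θ x' t := by
  have coe : ContDiff ℝ n fun y : ℝ => (y : ℂ) := ofRealCLM.contDiff
  unfold planeWave
  fun_prop

theorem contDiff_planeWave_right {n : WithTop ℕ∞} :
    ContDiff ℝ n fun t' => planeWave k ω θ x t' := by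
  have coe : ContDiff ℝ n fun y : ℝ => (y : ℂ) := ofRealCLM.contDiff
  unfold planeWave
  fun_prop

theorem deriv_planeWave_left :
    deriv (fun x' => planeWave k ω θ x' t) x = k * planeWave k ω θ x t := by
  have phase := (((hasDerivAt_id (x : ℂ)).const_mul k).sub_const (I * ω * t)).sub_const (I * θ)
  rw [mul_one] at phase
  exact phase.cexp.comp_ofReal.deriv.trans (mul_comm _ _)

theorem deriv_planeWave_right :
    deriv (fun t' => planeWave k ω θ x t') t = -(I * ω) * planeWave k ω θ x t := by
  have phase := (((hasDerivAt_id (t : ℂ)).const_mul (I * ω)).const_sub (k * x)).sub_const (I * θ)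
  rw [mul_one] at phase
  exact phase.cexp.comp_ofReal.deriv.trans (mul_comm _ _)

theorem conj_planeWave_neg :
    conj (planeWave k ω θ (-x) t) = (planeWave (conj k) (conj ω) (conj θ) x t)⁻¹ := by
  simp only [planeWave, ← exp_conj, ← exp_neg, map_sub, map_mul, map_neg, conj_ofReal, conj_I,
    ofReal_neg]
  ring_nf

end PlaneWave

section BrightSoliton

/-- The tau function `1 + E Ē` in the denominator of the one-bright-soliton, with complex
parameters; those of the nonlocal NLS soliton are real. -/
noncomputable def solitonTau (p pb θ θb : ℂ) (x t : ℝ) : ℂ :=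
  1 + planeWave (p + pb) (p ^ 2 - pb ^ 2) (θ + θb) x t

/-- The one-bright-soliton `q(x,t)`, which solves the nonlocal NLS equation for real parameters. -/
noncomputable def brightSoliton (p pb θ θb : ℂ) (x t : ℝ) : ℂ :=
  (p + pb) * planeWave p (p ^ 2) θ x t / solitonTau p pb θ θb x t

variable (p pb θ θb : ℂ) {x t : ℝ}

theorem planeWave_sq_mul_planeWave_neg_sq :
    planeWave p (p ^ 2) θ x t * planeWave pb (-pb ^ 2) θb x t =
      planeWave (p + pb) (p ^ 2 - pb ^ 2) (θ + θb) x t := by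
  rw [planeWave_mul_planeWave, ← sub_eq_add_neg]

theorem I_mul_hirotaDeriv_one_solitonTau :
    I * hirotaDeriv 1 (fun t' => (p + pb) * planeWave p (p ^ 2) θ x t')
        (fun t' => solitonTau p pb θ θb x t') t =
      hirotaDeriv 2 (fun x' => (p + pb) * planeWave p (p ^ 2) θ x' t)
        (fun x' => solitonTau p pb θ θb x' t) x := by
  have wave_t (s : ℝ) : deriv (fun t' => (p + pb) * planeWave p (p ^ 2) θ x t') s =
      -(I * p ^ 2) * ((p + pb) * planeWave p (p ^ 2) θ x s) := by
    rw [deriv_const_mul_field, deriv_planeWave_right, mul_left_comm]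
  have wave_x (y : ℝ) : deriv (fun x' => (p + pb) * planeWave p (p ^ 2) θ x' t) y =
      p * ((p + pb) * planeWave p (p ^ 2) θ y t) := by
    rw [deriv_const_mul_field, deriv_planeWave_left, mul_left_comm]
  unfold solitonTau
  rw [hirotaDeriv_one_one_add wave_t (deriv_planeWave_right _ _ _ x),
    hirotaDeriv_two_one_add wave_x fun y => deriv_planeWave_left _ _ _ y t]
  linear_combination (-(p + pb) * planeWave p (p ^ 2) θ x t *
    (p ^ 2 + pb ^ 2 * planeWave (p + pb) (p ^ 2 - pb ^ 2) (θ + θb) x t)) * I_sq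

theorem hirotaDeriv_two_solitonTau_self :
    hirotaDeriv 2 (fun x' => solitonTau p pb θ θb x' t) (fun x' => solitonTau p pb θ θb x' t) x =
      2 * ((p + pb) * planeWave p (p ^ 2) θ x t *
        ((p + pb) * planeWave pb (-pb ^ 2) θb x t)) := by
  unfold solitonTau
  rw [hirotaDeriv_two_one_add_self fun y => deriv_planeWave_left _ _ _ y t,
    ← planeWave_sq_mul_planeWave_neg_sq]
  ring

theorem brightSoliton_akns (hτ : solitonTau p pb θ θb x t ≠ 0) :
    I * deriv (fun t' => brightSoliton p pb θ θb x t') t =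
      deriv (deriv fun x' => brightSoliton p pb θ θb x' t) x +
        2 * ((p + pb) * planeWave pb (-pb ^ 2) θb x t / solitonTau p pb θ θb x t) *
          brightSoliton p pb θ θb x t ^ 2 :=
  nls_of_hirotaDeriv (f := solitonTau p pb θ θb)
    (g := fun x t => (p + pb) * planeWave p (p ^ 2) θ x t)
    (((contDiff_planeWave_right ..).differentiable one_ne_zero t).const_mul _)
    (((contDiff_planeWave_right ..).differentiable one_ne_zero t).const_add _)
    (contDiff_const.mul (contDiff_planeWave_left ..)).contDiffAt
    (contDiff_const.add (contDiff_planeWave_left ..)).contDiffAt hτ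
    (I_mul_hirotaDeriv_one_solitonTau ..) (hirotaDeriv_two_solitonTau_self ..)

end BrightSoliton

theorem conj_brightSoliton_neg (p pb θ θb x t : ℝ) :
    conj (brightSoliton p pb θ θb (-x) t) =
      (p + pb) * planeWave pb (-pb ^ 2) θb x t / solitonTau p pb θ θb x t := by
  let E := planeWave p (p ^ 2) θ x t
  let F := planeWave (p + pb) (p ^ 2 - pb ^ 2) (θ + θb) x t
  have hE : E ≠ 0 := planeWave_ne_zero _ _ _ _ _
  have hF : F ≠ 0 := planeWave_ne_zero _ _ _ _ _
  have hEF : E * planeWave pb (-pb ^ 2) θb x t = F := planeWave_sq_mul_planeWave_neg_sq ..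
  have conj_q : conj (brightSoliton p pb θ θb (-x) t) = (p + pb) * E⁻¹ / (1 + F⁻¹) := by
    simp only [brightSoliton, solitonTau, conj_planeWave_neg, map_div₀, map_mul, map_add, map_sub,
      map_pow, map_one, conj_ofReal, E, F]
  have num_eq : (p + pb) * E⁻¹ * F = (p + pb) * planeWave pb (-pb ^ 2) θb x t := by
    rw [mul_assoc, ← hEF, inv_mul_cancel_left₀ hE]
  have den_eq : (1 + F⁻¹) * F = solitonTau p pb θ θb x t := by
    rw [add_mul, one_mul, inv_mul_cancel₀ hF, add_comm, solitonTau]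
  rw [conj_q, ← mul_div_mul_right _ _ hF, num_eq, den_eq]

theorem stmt2_general (p pb θ θb : ℝ) {x t : ℝ} (hτ : solitonTau p pb θ θb x t ≠ 0) :
    I * deriv (fun t' => brightSoliton p pb θ θb x t') t =
      deriv (deriv fun x' => brightSoliton p pb θ θb x' t) x +
        2 * conj (brightSoliton p pb θ θb (-x) t) * brightSoliton p pb θ θb x t ^ 2 := by
  rw [conj_brightSoliton_neg]
  exact brightSoliton_akns p pb θ θb hτ

/-- The explicit one-bright-soliton
`q(x,t) = (p₁+p̄₁) exp(p₁x - i p₁² t - i θ₁) / (1 + exp((p₁+p̄₁)x - i(p₁²-p̄₁²)t - i(θ₁+θ̄₁)))`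
(with real parameters, `p₁+p̄₁ ≠ 0`, and nonvanishing denominator) solves the focusing
nonlocal NLS equation `i qₜ = q_xx + 2 q*(-x,t) q²`. -/
theorem stmt2 (p₁ pb₁ θ₁ θb₁ : ℝ) (hp : p₁ + pb₁ ≠ 0)
    (hD : ∀ x t : ℝ,
      (1 : ℂ) + Complex.exp (((p₁ : ℂ) + (pb₁ : ℂ)) * (x : ℂ)
          - Complex.I * ((p₁ : ℂ) ^ 2 - (pb₁ : ℂ) ^ 2) * (t : ℂ)
          - Complex.I * ((θ₁ : ℂ) + (θb₁ : ℂ))) ≠ 0)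
    (q : ℝ → ℝ → ℂ)
    (hq : ∀ x t : ℝ,
      q x t = ((p₁ : ℂ) + (pb₁ : ℂ))
          * Complex.exp ((p₁ : ℂ) * (x : ℂ) - Complex.I * (p₁ : ℂ) ^ 2 * (t : ℂ)
              - Complex.I * (θ₁ : ℂ))
          / ((1 : ℂ) + Complex.exp (((p₁ : ℂ) + (pb₁ : ℂ)) * (x : ℂ)
              - Complex.I * ((p₁ : ℂ) ^ 2 - (pb₁ : ℂ) ^ 2) * (t : ℂ)
              - Complex.I * ((θ₁ : ℂ) + (θb₁ : ℂ))))) :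
    ∀ x t : ℝ,
      Complex.I * deriv (fun t' => q x t') t
        = deriv (deriv (fun x' => q x' t)) x
          + 2 * conj (q (-x) t) * (q x t) ^ 2 := by
  intro x t
  obtain rfl : q = brightSoliton p₁ pb₁ θ₁ θb₁ := funext₂ hq
  exact stmt2_general p₁ pb₁ θ₁ θb₁ (hD x t)
end

section
/- Let N ≥ 1, ρ > 0, and let pᵢ, p̄ᵢ, cᵢ, ξ_{0i}, ξ̄_{0i} (1 ≤ i ≤ N) be complex constants with pᵢ·p̄ᵢ = ρ² for every i and pᵢ + p̄ⱼ ≠ 0 for all i, j (in particular pᵢ ≠ 0 and p̄ᵢ ≠ 0). For real variables (x₋₁, x₁, x₂) set ξᵢ = pᵢ⁻¹x₋₁ + pᵢx₁ + pᵢ²x₂ + ξ_{0i} and ξ̄ⱼ = p̄ⱼ⁻¹x₋₁ + p̄ⱼx₁ − p̄ⱼ²x₂ + ξ̄_{0j}. For each integer k define τ_k = det(M(k)) where M(k)_{ij} = cᵢδ_{ij} + (1/(pᵢ+p̄ⱼ))·(−pᵢ/p̄ⱼ)ᵏ·e^{ξᵢ+ξ̄ⱼ}. Then for every integer k and all (x₋₁,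 x₁, x₂): ∂_{x₁}τ_k = ρ²·∂_{x₋₁}τ_k. -/
/-!
The flows `x₁` and `x₋₁` enter entry `(i, j)` through `(pᵢ + p̄ⱼ) x₁ + (pᵢ⁻¹ + p̄ⱼ⁻¹) x₋₁`.
If `pᵢ p̄ᵢ = σ` for all `i`, then `pᵢ⁻¹ + p̄ⱼ⁻¹ = (pᵢ + p̄ⱼ) / σ - (dᵢ - dⱼ)` with
`dᵢ = (pᵢ - p̄ᵢ) / σ`. The term `dᵢ - dⱼ` amounts to a conjugation by an invertible diagonal matrix,
which fixes the diagonal part `c` and the determinant. Hence `τ_k` is a function of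
`x₁ + x₋₁ / σ`, and the chain rule gives the reduction.
-/

open Complex Matrix

/-- The Gram tau function `τ_k` of the single-component KP hierarchy:
`τ_k = det(cᵢδ_{ij} + (1/(pᵢ+p̄ⱼ))(-pᵢ/p̄ⱼ)ᵏ e^{ξᵢ+ξ̄ⱼ})` with
`ξᵢ = pᵢ⁻¹x₋₁ + pᵢx₁ + pᵢ²x₂ + ξ_{0i}` and
`ξ̄ⱼ = p̄ⱼ⁻¹x₋₁ + p̄ⱼx₁ - p̄ⱼ²x₂ + ξ̄_{0j}`. -/
noncomputable def tauk (N : ℕ) (p pb c ξ0 ξb0 : Fin N → ℂ) (k : ℤ)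
    (xm1 x₁ x₂ : ℝ) : ℂ :=
  Matrix.det (Matrix.of fun i j : Fin N =>
    (if i = j then c i else 0)
      + (1 / (p i + pb j)) * (-(p i) / pb j) ^ k
        * Complex.exp (((p i)⁻¹ * (xm1 : ℂ) + p i * (x₁ : ℂ) + (p i) ^ 2 * (x₂ : ℂ) + ξ0 i)
            + ((pb j)⁻¹ * (xm1 : ℂ) + pb j * (x₁ : ℂ) - (pb j) ^ 2 * (x₂ : ℂ) + ξb0 j)))

section DiagonalConjugation

variable {ι R : Type*} [Fintype ι] [DecidableEq ι] [CommRing R]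

theorem det_of_mul_mul_of_mul_eq_one {u v : ι → R} (huv : ∀ i, u i * v i = 1)
    (M : Matrix ι ι R) : det (of fun i j => u i * M i j * v j) = det M := by
  have hcomm : (of fun i j => u i * M i j * v j) =
      of fun i j => v j * (of fun i j => u i * M i j) i j := by
    ext i j
    exact mul_comm _ _
  rw [hcomm, det_mul_row, det_mul_column, ← mul_assoc, ← Finset.prod_mul_distrib]
  simp [mul_comm (v _), huv]

theorem det_of_exp_sub_mul (d : ι → ℂ) (M : Matrix ι ι ℂ) :
    det (of fun i j => exp (d i - d j) * M i j) = det M := by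
  have hsplit : (of fun i j => exp (d i - d j) * M i j) =
      of fun i j => exp (d i) * M i j * exp (-d j) := by
    ext i j
    simp only [of_apply, sub_eq_add_neg, exp_add]
    ring
  rw [hsplit]
  exact det_of_mul_mul_of_mul_eq_one (fun i => by rw [← exp_add, add_neg_cancel, exp_zero]) M

end DiagonalConjugation

theorem differentiable_det {ι 𝕜 E : Type*} [Fintype ι] [DecidableEq ι] [NontriviallyNormedField 𝕜]
    [NormedAddCommGroup E] [NormedSpace 𝕜 E] {M : E → Matrix ι ι 𝕜}
    (hM : ∀ i j, Differentiable 𝕜 fun z => M z i j) : Differentiable 𝕜 fun z => det (M z) := by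
  simp only [det_apply']
  fun_prop

section GramTau

variable {ι : Type*} [DecidableEq ι]

/-- The Gram matrix `cᵢ δᵢⱼ + Aᵢⱼ exp (pᵢ⁻¹ s + pᵢ t + qⱼ⁻¹ s + qⱼ t)` with `q = p̄`, as a function
of complex times `s = x₋₁` and `t = x₁`. The weights `A` absorb every factor independent of
these two times. -/
noncomputable def gramMatrix (p q c : ι → ℂ) (A : Matrix ι ι ℂ) (s t : ℂ) : Matrix ι ι ℂ :=
  diagonal c + of fun i j => A i j * exp ((p i)⁻¹ * s + p i * t + ((q j)⁻¹ * s + q j * t))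

theorem gramMatrix_apply_eq_exp_mul {σ : ℂ} (hσ : σ ≠ 0) {p q : ι → ℂ}
    (hpq : ∀ i, p i * q i = σ) (c : ι → ℂ) (A : Matrix ι ι ℂ) (s t : ℂ) (i j : ι) :
    gramMatrix p q c A s t i j =
      exp ((q i - p i) / σ * s - (q j - p j) / σ * s) *
        gramMatrix p q c A 0 (t + σ⁻¹ * s) i j := by
  have hp_inv : (p i)⁻¹ = q i / σ := by
    rw [← hpq i, div_mul_cancel_right₀ (right_ne_zero_of_mul (hpq i ▸ hσ))]
  have hq_inv : (q j)⁻¹ = p j / σ := by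
    rw [← hpq j, div_mul_cancel_left₀ (left_ne_zero_of_mul (hpq j ▸ hσ))]
  have hexp : (p i)⁻¹ * s + p i * t + ((q j)⁻¹ * s + q j * t) =
      (q i - p i) / σ * s - (q j - p j) / σ * s +
        ((p i)⁻¹ * 0 + p i * (t + σ⁻¹ * s) + ((q j)⁻¹ * 0 + q j * (t + σ⁻¹ * s))) := by
    rw [hp_inv, hq_inv]
    ring
  have hdiag : diagonal c i j =
      exp ((q i - p i) / σ * s - (q j - p j) / σ * s) * diagonal c i j := by
    obtain rfl | hij := eq_or_ne i j
    · rw [sub_self, exp_zero, one_mul]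
    · rw [diagonal_apply_ne c hij, mul_zero]
  simp only [gramMatrix, Matrix.add_apply, of_apply, mul_add (exp _), ← hdiag]
  rw [mul_left_comm, ← exp_add, hexp]

variable [Fintype ι]

/-- The Gram tau function with arbitrary weights `A` and complex times, of which `tauk` is a special
case. -/
noncomputable def gramTau (p q c : ι → ℂ) (A : Matrix ι ι ℂ) (s t : ℂ) : ℂ :=
  det (gramMatrix p q c A s t)

theorem gramTau_eq_gramTau_zero {σ : ℂ} (hσ : σ ≠ 0) {p q : ι → ℂ}
    (hpq : ∀ i, p i * q i = σ) (c : ι → ℂ) (A : Matrix ι ι ℂ) (s t : ℂ) :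
    gramTau p q c A s t = gramTau p q c A 0 (t + σ⁻¹ * s) := by
  unfold gramTau
  rw [← det_of_exp_sub_mul (fun i => (q i - p i) / σ * s)
    (gramMatrix p q c A 0 (t + σ⁻¹ * s))]
  congr 1
  ext i j
  exact gramMatrix_apply_eq_exp_mul hσ hpq c A s t i j

theorem differentiable_gramTau {E : Type*} [NormedAddCommGroup E] [NormedSpace ℂ E]
    (p q c : ι → ℂ) (A : Matrix ι ι ℂ) {f g : E → ℂ}
    (hf : Differentiable ℂ f) (hg : Differentiable ℂ g) :
    Differentiable ℂ fun z => gramTau p q c A (f z) (g z) := by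
  refine differentiable_det fun i j => ?_
  simp only [gramMatrix, Matrix.add_apply, of_apply]
  fun_prop

theorem stmt12_general {σ : ℂ} (hσ : σ ≠ 0) {p q : ι → ℂ} (hpq : ∀ i, p i * q i = σ)
    (c : ι → ℂ) (A : Matrix ι ι ℂ) (s t : ℂ) :
    deriv (fun u => gramTau p q c A s u) t = σ * deriv (fun u => gramTau p q c A u t) s := by
  simp only [gramTau_eq_gramTau_zero hσ hpq c A s, gramTau_eq_gramTau_zero hσ hpq c A _ t]
  rw [deriv_comp_add_const, deriv_comp_mul_left σ⁻¹ (fun v => gramTau p q c A 0 (t + v)),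
    deriv_comp_const_add, smul_eq_mul, mul_inv_cancel_left₀ hσ]

end GramTau

section RealTimes

theorem deriv_comp_ofReal {f : ℂ → ℂ} {x : ℝ} (hf : DifferentiableAt ℂ f x) :
    deriv (fun u : ℝ => f u) x = deriv f x :=
  hf.hasDerivAt.comp_ofReal.deriv

variable (N : ℕ) (p pb c ξ0 ξb0 : Fin N → ℂ) (k : ℤ)

/-- The weights of `tauk` as a `gramTau`: the factors multiplying the part of the
exponential that depends on `x₁` and `x₋₁`. -/
noncomputable def tauWeights (x₂ : ℝ) : Matrix (Fin N) (Fin N) ℂ :=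
  of fun i j => (1 / (p i + pb j)) * (-(p i) / pb j) ^ k *
    exp ((p i) ^ 2 * (x₂ : ℂ) + ξ0 i + (-(pb j) ^ 2 * (x₂ : ℂ) + ξb0 j))

theorem tauk_eq_gramTau (xm1 x₁ x₂ : ℝ) :
    tauk N p pb c ξ0 ξb0 k xm1 x₁ x₂ =
      gramTau p pb c (tauWeights N p pb ξ0 ξb0 k x₂) xm1 x₁ := by
  unfold tauk gramTau gramMatrix tauWeights
  congr 1
  ext i j
  simp only [of_apply, Matrix.add_apply, diagonal_apply]
  rw [mul_assoc _ (exp _) (exp _), ← exp_add]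
  ring_nf

theorem deriv_tauk_x₁ (xm1 x₁ x₂ : ℝ) :
    deriv (fun u => tauk N p pb c ξ0 ξb0 k xm1 u x₂) x₁ =
      deriv (fun u : ℂ => gramTau p pb c (tauWeights N p pb ξ0 ξb0 k x₂) xm1 u) x₁ := by
  simp only [tauk_eq_gramTau]
  exact deriv_comp_ofReal
    (differentiable_gramTau p pb c _ (differentiable_const _) differentiable_id _)

theorem deriv_tauk_xm1 (xm1 x₁ x₂ : ℝ) :
    deriv (fun u => tauk N p pb c ξ0 ξb0 k u x₁ x₂) xm1 =
      deriv (fun u : ℂ => gramTau p pb c (tauWeights N p pb ξ0 ξb0 k x₂) u x₁) xm1 := by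
  simp only [tauk_eq_gramTau]
  exact deriv_comp_ofReal
    (differentiable_gramTau p pb c _ differentiable_id (differentiable_const _) _)

end RealTimes

/-- under the constraint `pᵢ p̄ᵢ = ρ²`, the single-component KP Gram
tau functions satisfy the dimension reduction `∂_{x₁}τ_k = ρ² ∂_{x₋₁}τ_k`. -/
theorem stmt12 (N : ℕ) (hN : 1 ≤ N) (ρ : ℝ) (hρ : 0 < ρ)
    (p pb c ξ0 ξb0 : Fin N → ℂ)
    (hred : ∀ i, p i * pb i = (ρ : ℂ) ^ 2)
    (hp : ∀ i j, p i + pb j ≠ 0)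
    (hp0 : ∀ i, p i ≠ 0) (hpb0 : ∀ i, pb i ≠ 0) :
    ∀ (k : ℤ) (xm1 x₁ x₂ : ℝ),
      deriv (fun u => tauk N p pb c ξ0 ξb0 k xm1 u x₂) x₁
        = (ρ : ℂ) ^ 2 * deriv (fun u => tauk N p pb c ξ0 ξb0 k u x₁ x₂) xm1 := by
  intro k xm1 x₁ x₂
  rw [deriv_tauk_x₁, deriv_tauk_xm1]
  exact stmt12_general (pow_ne_zero 2 (ofReal_ne_zero.mpr hρ.ne')) hred c _ xm1 x₁
end
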